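/- Let (X,d) be a metric space, R a binary relation on X, f a self-mapping on X, and Y an R-complete subspace of X with f(X) ⊆ Y. Suppose: (i) R is f-closed; (ii) either f is R-continuous or R|_Y is d-self-closed; (iii) there exists x ∈ X with (x, f x) ∈ R; (iv) there exists α ∈ [0,1) such that d(f x, f y) ≤ α·d(x,y) for all x,y ∈ X with (x,y) ∈ R. Then f has a fixed point. Moreover, if additionally (v) f(X) is R^s-connected, i.e. for every pair of points u, v ∈ f(X) there is a path in R^s from u to v, then f has a unique fixed point. -/

import Mathlib

open Filter

/-!
Along an orbit starting at a point `x` with `R x (f x)` consecutive terms are `R`-related, so `f`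
contracts their distances geometrically and the orbit converges to some `y`. Either alternative on
`f` and `R` makes `f y` a cluster point of the images of the orbit; as these converge to `y`, we get
`f y = y`. For uniqueness, call two points asymptotic if the distance between their `n`-th iterates
tends to zero. This is an equivalence relation which contains `R`, hence it relates any two points
joined by a path, while two asymptotic fixed points coincide.
-/

section Development

open Function Relation
open scoped Topology Uniformity

variable {X Z : Type*}

section Definitions

variable (R : X → X → Prop)

/-- Sequences whose consecutive terms are `R`-related, called `R`-preserving in the literature on
metric spaces with a binary relation. -/
def RelPreserving (s : ℕ → X) : Prop :=
  ∀ n, R (s n) (s (n + 1))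

/-- The restriction of a relation to a set, encoded as a relation on the ambient type. -/
def RelRestrict (Y : Set X) (x y : X) : Prop :=
  R x y ∧ x ∈ Y ∧ y ∈ Y

/-- `R`-completeness of a subspace: only `R`-preserving Cauchy sequences need to converge. -/
def IsRelComplete [UniformSpace X] (Y : Set X) : Prop :=
  ∀ s : ℕ → X, (∀ n, s n ∈ Y) → RelPreserving R s → CauchySeq s → ∃ y ∈ Y, Tendsto s atTop (𝓝 y)

/-- `R`-continuity: sequential continuity tested on `R`-preserving sequences only. -/
def RelContinuous [TopologicalSpace X] [TopologicalSpace Z] (f : X → Z) : Prop :=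
  ∀ (s : ℕ → X) (x : X), RelPreserving R s → Tendsto s atTop (𝓝 x) →
    Tendsto (fun n ↦ f (s n)) atTop (𝓝 (f x))

/-- The property called `d`-self-closedness when the topology comes from a metric `d`: a convergent
`R`-preserving sequence has a subsequence whose terms are comparable to the limit. -/
def IsSelfClosedRel [TopologicalSpace X] : Prop :=
  ∀ (s : ℕ → X) (x : X), RelPreserving R s → Tendsto s atTop (𝓝 x) →
    ∃ φ : ℕ → ℕ, StrictMono φ ∧ ∀ k, SymmGen R (s (φ k)) x

/-- Two points are asymptotic under `f` if their `n`-th iterates become uniformly close; in a metric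
space this says that the distance between them tends to zero. -/
def Asymptotic [UniformSpace X] (f : X → X) (x y : X) : Prop :=
  Tendsto (fun n ↦ (f^[n] x, f^[n] y)) atTop (𝓤 X)

end Definitions

theorem eqvGen_of_path {R : X → X → Prop} {z : ℕ → X} {k : ℕ}
    (hz : ∀ i < k, SymmGen R (z i) (z (i + 1))) : EqvGen R (z 0) (z k) := by
  have hpath : ReflTransGen (fun i j ↦ SymmGen R (z i) (z j)) 0 k :=
    reflTransGen_of_succ_of_le _ (fun i hi ↦ hz i hi.2) k.zero_le
  rw [← EqvGen.reflTransGen_symmGen]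
  exact hpath.lift z fun _ _ ↦ id

section Iterate

variable {R : X → X → Prop} {f : X → X} {x y : X}

theorem rel_iterate (hclosed : ∀ x y, R x y → R (f x) (f y)) (hxy : R x y) (n : ℕ) :
    R (f^[n] x) (f^[n] y) := by
  induction n with
  | zero => exact hxy
  | succ n ih => simpa only [iterate_succ_apply'] using hclosed _ _ ih

theorem relPreserving_iterate (hclosed : ∀ x y, R x y → R (f x) (f y)) (hx : R x (f x)) :
    RelPreserving R fun n ↦ f^[n] x :=
  rel_iterate hclosed hx

end Iterate

section UniformSpace

variable [UniformSpace X] {f : X → X}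

instance Asymptotic.isEquiv : IsEquiv X (Asymptotic f) where
  refl _ := tendsto_diag_uniformity _ _
  symm _ _ h := h.uniformity_symm
  trans _ _ _ hxy hyz := hxy.uniformity_trans hyz

theorem Asymptotic.eq_of_isFixedPt [T0Space X] {x y : X} (h : Asymptotic f x y)
    (hx : IsFixedPt f x) (hy : IsFixedPt f y) : x = y := by
  refine eq_of_uniformity fun {V} hV ↦ ?_
  obtain ⟨n, hn⟩ := (h.eventually_mem hV).exists
  rwa [iterate_fixed hx, iterate_fixed hy] at hn

end UniformSpace

theorem isFixedPt_of_mapClusterPt_iterate [TopologicalSpace X] [T2Space X] {f : X → X} {x y : X}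
    (hy : Tendsto (fun n ↦ f^[n] x) atTop (𝓝 y))
    (hfy : MapClusterPt (f y) atTop fun n ↦ f (f^[n] x)) : IsFixedPt f y := by
  have himage : Tendsto (fun n ↦ f (f^[n] x)) atTop (𝓝 y) := by
    simpa only [iterate_succ_apply'] using (tendsto_add_atTop_iff_nat 1).2 hy
  exact eq_of_nhds_neBot (hfy.clusterPt.mono himage)

section PseudoMetricSpace

variable [PseudoMetricSpace X] {R : X → X → Prop} {α : ℝ}

theorem dist_map_le_of_symmGen [PseudoMetricSpace Z] {f : X → Z}
    (hdist : ∀ x y, R x y → dist (f x) (f y) ≤ α * dist x y) {x y : X} (hxy : SymmGen R x y) :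
    dist (f x) (f y) ≤ α * dist x y := by
  rcases hxy with h | h
  · exact hdist x y h
  · simpa only [dist_comm] using hdist y x h

theorem IsSelfClosedRel.mapClusterPt [PseudoMetricSpace Z] {f : X → Z} (hR : IsSelfClosedRel R)
    (hdist : ∀ x y, R x y → dist (f x) (f y) ≤ α * dist x y) {s : ℕ → X} {x : X}
    (hs : RelPreserving R s) (hx : Tendsto s atTop (𝓝 x)) :
    MapClusterPt (f x) atTop fun n ↦ f (s n) := by
  obtain ⟨φ, hφ, hrel⟩ := hR s x hs hx
  have hbound : Tendsto (fun k ↦ α * dist (s (φ k)) x) atTop (𝓝 0) := by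
    simpa only [comp_apply, mul_zero] using
      (tendsto_iff_dist_tendsto_zero.1 (hx.comp hφ.tendsto_atTop)).const_mul α
  have hsub : Tendsto (fun k ↦ f (s (φ k))) atTop (𝓝 (f x)) :=
    tendsto_iff_dist_tendsto_zero.2 <| squeeze_zero (fun _ ↦ dist_nonneg)
      (fun k ↦ dist_map_le_of_symmGen hdist (hrel k)) hbound
  exact .of_comp hφ.tendsto_atTop hsub.mapClusterPt

variable {f : X → X} {x y : X}

theorem dist_iterate_le_of_rel (hclosed : ∀ x y, R x y → R (f x) (f y)) (hα₀ : 0 ≤ α)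
    (hdist : ∀ x y, R x y → dist (f x) (f y) ≤ α * dist x y) (hxy : R x y) (n : ℕ) :
    dist (f^[n] x) (f^[n] y) ≤ α ^ n * dist x y := by
  induction n with
  | zero => simp
  | succ n ih =>
    simp only [iterate_succ_apply']
    calc dist (f (f^[n] x)) (f (f^[n] y))
      _ ≤ α * dist (f^[n] x) (f^[n] y) := hdist _ _ (rel_iterate hclosed hxy n)
      _ ≤ α * (α ^ n * dist x y) := by gcongr
      _ = α ^ (n + 1) * dist x y := by ring

theorem cauchySeq_iterate_of_rel (hclosed : ∀ x y, R x y → R (f x) (f y)) (hα₀ : 0 ≤ α)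
    (hα₁ : α < 1) (hdist : ∀ x y, R x y → dist (f x) (f y) ≤ α * dist x y)
    (hx : R x (f x)) : CauchySeq fun n ↦ f^[n] x := by
  refine cauchySeq_of_le_geometric α (dist x (f x)) hα₁ fun n ↦ ?_
  rw [mul_comm]
  exact dist_iterate_le_of_rel hclosed hα₀ hdist hx n

theorem IsRelComplete.exists_tendsto_iterate {Y : Set X} (hY : IsRelComplete R Y)
    (hmaps : Set.MapsTo f Y Y) (hclosed : ∀ x y, R x y → R (f x) (f y)) (hα₀ : 0 ≤ α)
    (hα₁ : α < 1) (hdist : ∀ x y, R x y → dist (f x) (f y) ≤ α * dist x y) (hxY : x ∈ Y)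
    (hx : R x (f x)) : ∃ y ∈ Y, Tendsto (fun n ↦ f^[n] x) atTop (𝓝 y) :=
  hY _ (fun n ↦ hmaps.iterate n hxY) (relPreserving_iterate hclosed hx)
    (cauchySeq_iterate_of_rel hclosed hα₀ hα₁ hdist hx)

theorem asymptotic_of_rel (hclosed : ∀ x y, R x y → R (f x) (f y)) (hα₀ : 0 ≤ α) (hα₁ : α < 1)
    (hdist : ∀ x y, R x y → dist (f x) (f y) ≤ α * dist x y) (hxy : R x y) :
    Asymptotic f x y := by
  have hgeom : Tendsto (fun n ↦ α ^ n * dist x y) atTop (𝓝 0) := by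
    simpa only [zero_mul] using
      (tendsto_pow_atTop_nhds_zero_of_lt_one hα₀ hα₁).mul_const (dist x y)
  exact tendsto_uniformity_iff_dist_tendsto_zero.2 <| squeeze_zero (fun _ ↦ dist_nonneg)
    (dist_iterate_le_of_rel hclosed hα₀ hdist hxy) hgeom

theorem asymptotic_of_eqvGen (hclosed : ∀ x y, R x y → R (f x) (f y)) (hα₀ : 0 ≤ α) (hα₁ : α < 1)
    (hdist : ∀ x y, R x y → dist (f x) (f y) ≤ α * dist x y) (hxy : EqvGen R x y) :
    Asymptotic f x y :=
  have hle : R ≤ Asymptotic f := fun _ _ ↦ asymptotic_of_rel hclosed hα₀ hα₁ hdist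
  EqvGen.eqvGen_le hle x y hxy

end PseudoMetricSpace

theorem IsRelComplete.exists_isFixedPt [MetricSpace X] {R : X → X → Prop} {f : X → X} {Y : Set X}
    {α : ℝ} (hY : IsRelComplete R Y) (hmaps : Set.MapsTo f Y Y)
    (hclosed : ∀ x y, R x y → R (f x) (f y))
    (hf : RelContinuous R f ∨ IsSelfClosedRel (RelRestrict R Y)) (hα₀ : 0 ≤ α) (hα₁ : α < 1)
    (hdist : ∀ x y, R x y → dist (f x) (f y) ≤ α * dist x y) {x : X} (hxY : x ∈ Y)
    (hx : R x (f x)) : ∃ y ∈ Y, IsFixedPt f y := by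
  obtain ⟨y, hyY, hy⟩ := hY.exists_tendsto_iterate hmaps hclosed hα₀ hα₁ hdist hxY hx
  refine ⟨y, hyY, isFixedPt_of_mapClusterPt_iterate hy ?_⟩
  have horbit := relPreserving_iterate hclosed hx
  rcases hf with hcont | hself
  · exact (hcont _ y horbit hy).mapClusterPt
  · have horbitY (n : ℕ) : f^[n] x ∈ Y := hmaps.iterate n hxY
    exact hself.mapClusterPt (fun a b hab ↦ hdist a b hab.1)
      (fun n ↦ ⟨horbit n, horbitY n, horbitY (n + 1)⟩) hy

end Development

/-- Corollary 4: fixed point theorem for a self-mapping `f` on a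
metric space with an `R`-complete subspace `Y ⊇ f(X)`; uniqueness under
`R^s`-connectedness of `f(X)`. -/
theorem fixed_point_via_rComplete_subspace {X : Type*} [MetricSpace X]
    (R : X → X → Prop) (f : X → X) (Y : Set X)
    (hY : ∀ s : ℕ → X, (∀ n, s n ∈ Y) → (∀ n, R (s n) (s (n + 1))) → CauchySeq s →
      ∃ y ∈ Y, Tendsto s atTop (nhds y))
    (hfY : ∀ x : X, f x ∈ Y)
    (h1 : ∀ x y : X, R x y → R (f x) (f y))
    (h2 : (∀ (s : ℕ → X) (x : X), (∀ n, R (s n) (s (n + 1))) →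
        Tendsto s atTop (nhds x) →
        Tendsto (fun n => f (s n)) atTop (nhds (f x))) ∨
      (∀ (s : ℕ → X) (x : X),
        (∀ n, R (s n) (s (n + 1)) ∧ s n ∈ Y ∧ s (n + 1) ∈ Y) →
        Tendsto s atTop (nhds x) →
        ∃ φ : ℕ → ℕ, StrictMono φ ∧
          ∀ k, (R (s (φ k)) x ∧ s (φ k) ∈ Y ∧ x ∈ Y) ∨
               (R x (s (φ k)) ∧ x ∈ Y ∧ s (φ k) ∈ Y)))
    (h3 : ∃ x : X, R x (f x))
    (h4 : ∃ α : ℝ, 0 ≤ α ∧ α < 1 ∧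
      ∀ x y : X, R x y → dist (f x) (f y) ≤ α * dist x y) :
    (∃ x : X, f x = x) ∧
    ((∀ u ∈ Set.range f, ∀ v ∈ Set.range f,
        ∃ (k : ℕ) (z : ℕ → X), z 0 = u ∧ z k = v ∧
          ∀ i < k, (R (z i) (z (i + 1)) ∨ R (z (i + 1)) (z i))) →
      ∃! x : X, f x = x) := by
  obtain ⟨α, hα₀, hα₁, hdist⟩ := h4
  have hexists : ∃ x, f x = x := by
    obtain ⟨x, hx⟩ := h3
    obtain ⟨y, -, hy⟩ := IsRelComplete.exists_isFixedPt hY (fun x _ ↦ hfY x) h1 h2 hα₀ hα₁ hdist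
      (hfY x) (h1 _ _ hx)
    exact ⟨y, hy⟩
  refine ⟨hexists, fun hconn ↦ hexists.imp fun x hx ↦ ⟨hx, fun y hy ↦ ?_⟩⟩
  obtain ⟨k, z, rfl, rfl, hz⟩ := hconn y ⟨y, hy⟩ x ⟨x, hx⟩
  have hasymp : Asymptotic f (z 0) (z k) :=
    asymptotic_of_eqvGen h1 hα₀ hα₁ hdist (eqvGen_of_path hz)
  exact hasymp.eq_of_isFixedPt hy hx
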